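/- Suppose there is K > 0 with Q_j ≥ j − K for all j ≥ 1, and Q_j > (j − 1/2)·θ/π for all j ≥ 1. Then there exists N_0 such that for every integer N ≥ N_0 the sequence X̲ defined by X̲_k := N^{k − N²} for 1 ≤ k < N² and X̲_k := (k − N² + N)^{α_θ} for k ≥ N² satisfies φ_j(X̲, X̲) ≤ Q_j for all j ≥ 1. -/

import Mathlib

open Filter Asymptotics MeasureTheory
open scoped ENNReal Topology

/-- `Theta θ E' E` is the argument of the complex number `E' + E·e^{iθ}`;
for `0 < θ < π` and `E', E > 0` it lies in `(0, θ)` and equals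
`arctan (sin θ / (E'/E + cos θ))` with the branch taken in `(0, θ)`. -/
noncomputable def Theta (θ E' E : ℝ) : ℝ :=
  Complex.arg ((E' : ℂ) + (E : ℂ) * Complex.exp (θ * Complex.I))

/-- `phi θ X Y j = (1/π) · ∑_{k ≥ 1} Θ(X_k, Y_j) ∈ (0, ∞]`, where sequences are
indexed by `ℕ` and only the values at indices `k ≥ 1` are used. -/
noncomputable def phi (θ : ℝ) (X Y : ℕ → ℝ) (j : ℕ) : ℝ≥0∞ :=
  ENNReal.ofReal (1 / Real.pi) * ∑' k : ℕ, ENNReal.ofReal (Theta θ (X (k + 1)) (Y j))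

/-- `Pker θ E E' = E·E' / (E² + 2·cos θ·E·E' + E'²)`. -/
noncomputable def Pker (θ E E' : ℝ) : ℝ :=
  E * E' / (E ^ 2 + 2 * Real.cos θ * E * E' + E' ^ 2)

/-- The drift `D_α = (1/π) ∫_0^∞ Θ(s^α, 1) ds`. -/
noncomputable def Drift (θ α : ℝ) : ℝ :=
  (1 / Real.pi) * ∫ s in Set.Ioi (0 : ℝ), Theta θ (s ^ α) 1

/-- `S_ε = ∫_0^∞ s^{-ε} / (s^{α_θ} + 2 cos θ + s^{-α_θ}) ds` with `α_θ = 1 + θ/π`. -/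
noncomputable def Sfun (θ ε : ℝ) : ℝ :=
  ∫ s in Set.Ioi (0 : ℝ), s ^ (-ε) /
    (s ^ (1 + θ / Real.pi) + 2 * Real.cos θ + s ^ (-(1 + θ / Real.pi)))

/-- The comparison sequence `X̲` of the paper: `X̲_k = N^{k - N²}` for `k < N²`
and `X̲_k = (k - N² + N)^{α_θ}` for `k ≥ N²`. -/
noncomputable def lowerSeq (θ : ℝ) (N : ℕ) (k : ℕ) : ℝ :=
  if k < N ^ 2 then (N : ℝ) ^ ((k : ℤ) - (N : ℤ) ^ 2)
  else ((k : ℝ) - (N : ℝ) ^ 2 + (N : ℝ)) ^ (1 + θ / Real.pi)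

lemma arctan_le_self_aux {x : ℝ} (hx : 0 ≤ x) : Real.arctan x ≤ x := by
  have := Real.le_tan (Real.arctan_nonneg.2 hx) (Real.arctan_lt_pi_div_two x)
  rwa [Real.tan_arctan] at this

lemma Theta_eq {θ E' E : ℝ} (hθ : 0 < θ) (hθπ : θ < Real.pi) (hE : 0 < E) :
    Theta θ E' E = Real.pi / 2 - Real.arctan ((E' + E * Real.cos θ) / (E * Real.sin θ)) := by
  have hs : 0 < E * Real.sin θ := mul_pos hE (Real.sin_pos_of_pos_of_lt_pi hθ hθπ)
  set y := E * Real.sin θ with hy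
  set x := E' + E * Real.cos θ with hx
  set t := x / y with ht
  have hq : 0 < Real.sqrt (1 + t ^ 2) := Real.sqrt_pos.2 (by positivity)
  have h1 : (E' : ℂ) + (E : ℂ) * Complex.exp (θ * Complex.I)
      = ((y * Real.sqrt (1 + t ^ 2) : ℝ) : ℂ) * (Complex.cos ((Real.pi / 2 - Real.arctan t : ℝ) : ℂ)
        + Complex.sin ((Real.pi / 2 - Real.arctan t : ℝ) : ℂ) * Complex.I) := by
    rw [← Complex.ofReal_cos, ← Complex.ofReal_sin, Real.cos_pi_div_two_sub, Real.sin_pi_div_two_sub,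
      Real.sin_arctan, Real.cos_arctan, Complex.exp_mul_I, ← Complex.ofReal_cos, ← Complex.ofReal_sin]
    apply Complex.ext
    · simp [Complex.cos_ofReal_re]
      rw [ht]
      field_simp
      rw [hx]
    · simp [Complex.sin_ofReal_re]
      field_simp
      rw [hy]
  rw [Theta, h1, Complex.arg_mul_cos_add_sin_mul_I (mul_pos hs hq)]
  constructor <;> linarith [Real.neg_pi_div_two_lt_arctan t, Real.arctan_lt_pi_div_two t, Real.pi_pos]

lemma Theta_nonneg {θ E' E : ℝ} (hθ : 0 < θ) (hθπ : θ < Real.pi) (hE : 0 < E) : 0 ≤ Theta θ E' E := by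
  rw [Theta_eq hθ hθπ hE]
  linarith [Real.arctan_lt_pi_div_two ((E' + E * Real.cos θ) / (E * Real.sin θ))]

lemma Theta_le_pi {θ E' E : ℝ} : Theta θ E' E ≤ Real.pi := Complex.arg_le_pi _

lemma Theta_anti {θ E : ℝ} (hθ : 0 < θ) (hθπ : θ < Real.pi) (hE : 0 < E) :
    Antitone (fun E' => Theta θ E' E) := by
  intro a b hab
  have hs : 0 < E * Real.sin θ := mul_pos hE (Real.sin_pos_of_pos_of_lt_pi hθ hθπ)
  simp only [Theta_eq hθ hθπ hE]
  have := Real.arctan_mono (show (a + E * Real.cos θ) / (E * Real.sin θ) ≤ (b + E * Real.cos θ) / (E * Real.sin θ) by gcongr)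
  linarith

lemma Theta_le {θ E' E : ℝ} (hθ : 0 < θ) (hθπ : θ < Real.pi) (hE : 0 < E) (hE' : 0 ≤ E') :
    Theta θ E' E ≤ θ := by
  refine (Theta_anti hθ hθπ hE hE').trans ?_
  simp only [Theta, Complex.ofReal_zero, zero_add]
  rw [Complex.arg_real_mul _ hE, Complex.arg_exp_mul_I]
  apply le_of_eq
  rw [toIocMod_eq_self]
  constructor <;> linarith

lemma Theta_self {θ E : ℝ} (hθ : 0 < θ) (hθπ : θ < Real.pi) (hE : 0 < E) :
    Theta θ E E = θ / 2 := by
  have hs : 0 < Real.sin (θ / 2) := Real.sin_pos_of_pos_of_lt_pi (by linarith) (by linarith)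
  have hc : 0 < Real.cos (θ / 2) := Real.cos_pos_of_mem_Ioo ⟨by linarith, by linarith⟩
  rw [Theta_eq hθ hθπ hE]
  have : (E + E * Real.cos θ) / (E * Real.sin θ) = Real.tan (Real.pi / 2 - θ / 2) := by
    rw [Real.tan_eq_sin_div_cos, Real.sin_pi_div_two_sub, Real.cos_pi_div_two_sub]
    have h2 : θ = 2 * (θ / 2) := by ring
    generalize θ / 2 = u at *
    rw [h2, Real.cos_two_mul, Real.sin_two_mul]
    field_simp
    ring
  rw [this, Real.arctan_tan] <;> linarith

lemma Theta_le_ratio {θ E' E : ℝ} (hθ : 0 < θ) (hθπ : θ < Real.pi) (hE : 0 < E) (hE' : 0 < E') :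
    Theta θ E' E ≤ 2 * Real.pi * (E / E') := by
  have hsin := Real.sin_pos_of_pos_of_lt_pi hθ hθπ
  have hs : 0 < E * Real.sin θ := mul_pos hE hsin
  rcases le_or_gt (2 * E) E' with h | h
  · have hx : 0 < E' + E * Real.cos θ := by nlinarith [Real.neg_one_le_cos θ]
    rw [Theta_eq hθ hθπ hE]
    have h3 := Real.arctan_inv_of_pos (div_pos hx hs)
    rw [← h3]
    have h4 : Real.arctan ((E' + E * Real.cos θ) / (E * Real.sin θ))⁻¹ ≤ ((E' + E * Real.cos θ) / (E * Real.sin θ))⁻¹ :=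
      arctan_le_self_aux (by positivity)
    refine h4.trans ?_
    rw [inv_div]
    have h5 : E * Real.sin θ / (E' + E * Real.cos θ) ≤ E / (E' / 2) := by
      apply div_le_div₀ hE.le _ (by positivity) _
      · nlinarith [Real.sin_le_one θ]
      · nlinarith [Real.neg_one_le_cos θ]
    refine h5.trans ?_
    rw [show E / (E' / 2) = 2 * (E / E') by field_simp]
    have : 0 < E / E' := by positivity
    nlinarith [Real.pi_gt_three]
  · refine Theta_le_pi.trans ?_
    have : 1 / 2 ≤ E / E' := by rw [div_le_div_iff₀ (by norm_num) hE']; linarith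
    nlinarith [Real.pi_pos]

lemma Theta_le_D {θ x : ℝ} (hθ : 0 < θ) (hθπ : θ < Real.pi) (hx : 0 < x) :
    Theta θ x 1 ≤ 4 * Real.pi * (1 + x)⁻¹ := by
  have h1 := Theta_le_ratio hθ hθπ one_pos hx
  have h2 : Theta θ x 1 ≤ Real.pi := Theta_le_pi
  rw [← div_eq_mul_inv, le_div_iff₀ (by positivity)]
  have : Theta θ x 1 * x ≤ 2 * Real.pi := by
    calc _ ≤ 2 * Real.pi * (1 / x) * x := by gcongr
      _ = _ := by field_simp
  nlinarith [Real.pi_pos]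

lemma Theta_scale {θ x E : ℝ} (hE : 0 < E) : Theta θ (x * E) E = Theta θ x 1 := by
  rw [Theta, Theta, ← Complex.arg_real_mul ((x : ℂ) + _) hE]
  congr 1
  push_cast; ring

open Set in
lemma D_int {α : ℝ} (hα : 1 < α) : IntegrableOn (fun s : ℝ => (1 + s ^ α)⁻¹) (Ioi 0) := by
  have hm : Measurable (fun s : ℝ => (1 + s ^ α)⁻¹) := by fun_prop
  rw [← Ioc_union_Ioi_eq_Ioi (zero_le_one (α := ℝ))]
  apply IntegrableOn.union
  · apply Measure.integrableOn_of_bounded (M := 1) (by simp) hm.aestronglyMeasurable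
    filter_upwards [ae_restrict_mem measurableSet_Ioc] with s hs
    have := Real.rpow_pos_of_pos hs.1 α
    rw [Real.norm_of_nonneg (by positivity)]
    apply inv_le_one_of_one_le₀; linarith
  · apply (integrableOn_Ioi_rpow_of_lt (a := -α) (by linarith) one_pos).mono' hm.aestronglyMeasurable
    filter_upwards [ae_restrict_mem measurableSet_Ioi] with s hs
    have hs0 : (0:ℝ) < s := lt_trans one_pos hs
    have := Real.rpow_pos_of_pos hs0 α
    rw [Real.norm_of_nonneg (by positivity), Real.rpow_neg hs0.le]
    gcongr; linarith

lemma den_bound {x φ c : ℝ} (hx : 0 ≤ x) (hc : 0 ≤ c) (h : c ≤ Real.cos (φ / 2)) :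
    c * (1 + x) ≤ ‖1 + (x : ℂ) * Complex.exp (-(φ * Complex.I))‖ := by
  apply le_of_sq_le_sq _ (norm_nonneg _)
  rw [← Complex.normSq_eq_norm_sq, Complex.normSq_apply]
  have e : Complex.exp (-(φ * Complex.I)) = (Real.cos φ : ℂ) - Real.sin φ * Complex.I := by
    rw [← neg_mul, ← Complex.ofReal_neg, Complex.exp_mul_I, ← Complex.ofReal_cos, ← Complex.ofReal_sin]
    simp [sub_eq_add_neg]
  rw [e]
  simp [Complex.sin_ofReal_re, Complex.cos_ofReal_re]
  have h1 : Real.cos φ = 2 * Real.cos (φ / 2) ^ 2 - 1 := by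
    rw [← Real.cos_two_mul]; ring_nf
  have h2 := Real.sin_sq_add_cos_sq φ
  have h3 : c ^ 2 ≤ (1 + Real.cos φ) / 2 := by rw [h1]; nlinarith
  have h4 : c ^ 2 * (1 + x) ^ 2 ≤ (1 + Real.cos φ) / 2 * (1 + x) ^ 2 := by gcongr
  nlinarith [mul_nonneg (sub_nonneg.2 (Real.cos_le_one φ)) (sq_nonneg (1 - x))]

lemma cos_half_pos {φ : ℝ} (h : φ ∈ Set.Ioo (-Real.pi) Real.pi) : 0 < Real.cos (φ / 2) :=
  Real.cos_pos_of_mem_Ioo ⟨by linarith [h.1], by linarith [h.2]⟩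

lemma den_ne {x φ : ℝ} (hx : 0 ≤ x) (h : φ ∈ Set.Ioo (-Real.pi) Real.pi) :
    1 + (x : ℂ) * Complex.exp (-(φ * Complex.I)) ≠ 0 := by
  have := den_bound hx (cos_half_pos h).le le_rfl
  have h2 : 0 < Real.cos (φ / 2) * (1 + x) := mul_pos (cos_half_pos h) (by linarith)
  intro h0
  rw [h0, norm_zero] at this
  linarith

noncomputable def gfun (α φ : ℝ) : ℂ :=
  ∫ s in Set.Ioi (0 : ℝ), (1 + ((s ^ α : ℝ) : ℂ) * Complex.exp (-(φ * Complex.I)))⁻¹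

lemma g_norm {α φ c s : ℝ} (hs : 0 < s) (hc : 0 < c) (h : c ≤ Real.cos (φ / 2)) :
    ‖(1 + ((s ^ α : ℝ) : ℂ) * Complex.exp (-(φ * Complex.I)))⁻¹‖ ≤ c⁻¹ * (1 + s ^ α)⁻¹ := by
  have hp := Real.rpow_pos_of_pos hs α
  rw [norm_inv, ← mul_inv]
  exact inv_anti₀ (by positivity) (den_bound hp.le hc.le h)

lemma g_int {α φ : ℝ} (hα : 1 < α) (h : φ ∈ Set.Ioo (-Real.pi) Real.pi) :
    IntegrableOn (fun s : ℝ => (1 + ((s ^ α : ℝ) : ℂ) * Complex.exp (-(φ * Complex.I)))⁻¹) (Set.Ioi 0) := by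
  apply ((D_int hα).const_mul (Real.cos (φ / 2))⁻¹).mono' (by fun_prop)
  filter_upwards [ae_restrict_mem measurableSet_Ioi] with s hs
  exact g_norm hs (cos_half_pos h) le_rfl

lemma gd_norm {α φ c s : ℝ} (hs : 0 < s) (hc : 0 < c) (h : c ≤ Real.cos (φ / 2)) :
    ‖Complex.I * (((s ^ α : ℝ) : ℂ) * Complex.exp (-(φ * Complex.I))) /
      (1 + ((s ^ α : ℝ) : ℂ) * Complex.exp (-(φ * Complex.I))) ^ 2‖ ≤ (c ^ 2)⁻¹ * (1 + s ^ α)⁻¹ := by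
  have hp := Real.rpow_pos_of_pos hs α
  have e : ‖Complex.exp (-(φ * Complex.I))‖ = 1 := by
    rw [← neg_mul, ← Complex.ofReal_neg, Complex.norm_exp_ofReal_mul_I]
  rw [norm_div, norm_mul, norm_mul, norm_pow, e, Complex.norm_I, Complex.norm_of_nonneg hp.le]
  have := den_bound hp.le hc.le h
  calc _ ≤ (1 + s ^ α) / (c * (1 + s ^ α)) ^ 2 := by
        gcongr
        linarith
    _ = _ := by field_simp

lemma g_deriv0 {α φ : ℝ} (hα : 1 < α) (h : φ ∈ Set.Ioo (-Real.pi) Real.pi) :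
    Integrable (fun s : ℝ => Complex.I * (((s ^ α : ℝ) : ℂ) * Complex.exp (-(φ * Complex.I))) /
      (1 + ((s ^ α : ℝ) : ℂ) * Complex.exp (-(φ * Complex.I))) ^ 2) (volume.restrict (Set.Ioi 0)) ∧
    HasDerivAt (gfun α) (∫ s in Set.Ioi (0 : ℝ), Complex.I * (((s ^ α : ℝ) : ℂ) * Complex.exp (-(φ * Complex.I))) /
      (1 + ((s ^ α : ℝ) : ℂ) * Complex.exp (-(φ * Complex.I))) ^ 2) φ := by
  have hc := cos_half_pos h
  set c := Real.cos (φ / 2) / 2 with hcd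
  have hc0 : 0 < c := by positivity
  have hnb : {ψ : ℝ | ψ ∈ Set.Ioo (-Real.pi) Real.pi ∧ c ≤ Real.cos (ψ / 2)} ∈ 𝓝 φ := by
    apply Filter.inter_mem (Ioo_mem_nhds h.1 h.2)
    have : ContinuousAt (fun ψ : ℝ => Real.cos (ψ / 2)) φ := by fun_prop
    exact (this.eventually (lt_mem_nhds (show c < Real.cos (φ / 2) by linarith))).mono (fun x hx => le_of_lt hx)
  refine hasDerivAt_integral_of_dominated_loc_of_deriv_le (F := fun (φ : ℝ) (s : ℝ) => (1 + ((s ^ α : ℝ) : ℂ) * Complex.exp (-(φ * Complex.I)))⁻¹)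
    (F' := fun (φ : ℝ) (s : ℝ) => Complex.I * (((s ^ α : ℝ) : ℂ) * Complex.exp (-(φ * Complex.I))) /
      (1 + ((s ^ α : ℝ) : ℂ) * Complex.exp (-(φ * Complex.I))) ^ 2)
    (bound := fun s => (c ^ 2)⁻¹ * (1 + s ^ α)⁻¹) hnb ?_ (g_int hα h) ?_ ?_ ?_ ?_
  · exact Eventually.of_forall fun x => by fun_prop
  · apply Measurable.aestronglyMeasurable
    fun_prop
  · filter_upwards [ae_restrict_mem measurableSet_Ioi] with s hs x hx
    exact gd_norm hs hc0 hx.2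
  · exact (D_int hα).const_mul _
  · filter_upwards [ae_restrict_mem measurableSet_Ioi] with s hs x hx
    have hp := Real.rpow_pos_of_pos hs α
    have hne := den_ne hp.le hx.1
    have h1 : HasDerivAt (fun x : ℝ => -((x : ℂ) * Complex.I)) (-(1 * Complex.I)) x :=
      ((Complex.ofRealCLM.hasDerivAt (x := x)).mul_const _).neg
    have h2 := ((h1.cexp.const_mul ((s ^ α : ℝ) : ℂ)).const_add 1).inv hne
    refine HasDerivAt.congr_deriv h2 ?_
    ring

lemma g_deriv {α φ : ℝ} (hα : 1 < α) (h : φ ∈ Set.Ioo (-Real.pi) Real.pi) :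
    HasDerivAt (gfun α) (Complex.I / α * gfun α φ) φ := by
  obtain ⟨hi, hd⟩ := g_deriv0 hα h
  convert hd using 1
  set w := Complex.exp (-(φ * Complex.I)) with hw
  have hα0 : (α : ℂ) ≠ 0 := by exact_mod_cast (by linarith : α ≠ 0)
  have key : ∫ s in Set.Ioi (0 : ℝ), ((1 + ((s ^ α : ℝ) : ℂ) * w)⁻¹ - α / Complex.I * (Complex.I * (((s ^ α : ℝ) : ℂ) * w) /
      (1 + ((s ^ α : ℝ) : ℂ) * w) ^ 2)) = 0 - (fun s : ℝ => (s : ℂ) * (1 + ((s ^ α : ℝ) : ℂ) * w)⁻¹) 0 := by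
    apply integral_Ioi_of_hasDerivAt_of_tendsto (f := fun s : ℝ => (s : ℂ) * (1 + ((s ^ α : ℝ) : ℂ) * w)⁻¹)
    · apply ContinuousAt.continuousWithinAt
      apply ContinuousAt.mul (by fun_prop)
      apply ContinuousAt.inv₀
      · have := Real.continuousAt_rpow_const 0 α (Or.inr (by linarith))
        fun_prop
      · exact den_ne (Real.rpow_nonneg le_rfl _) h
    · intro s hs
      have hp := Real.rpow_pos_of_pos hs α
      have hne := den_ne hp.le h
      have h1 := (Real.hasDerivAt_rpow_const (p := α) (Or.inl (ne_of_gt hs))).ofReal_comp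
      have h2 := (Complex.ofRealCLM.hasDerivAt (x := s)).mul (((h1.mul_const w).const_add 1).inv hne)
      refine HasDerivAt.congr_deriv h2 ?_
      have h3 : s ^ α = s * s ^ (α - 1) := by
        have hs' : s ≠ 0 := ne_of_gt hs
        rw [Real.rpow_sub hs, Real.rpow_one]; field_simp
      rw [← hw] at hne
      simp only [Complex.ofRealCLM_apply, Complex.ofReal_one, Pi.inv_apply]
      rw [h3] at hne ⊢
      push_cast at hne ⊢
      field_simp
      ring
    · exact (g_int hα h).sub (hi.const_mul _)
    · rw [tendsto_zero_iff_norm_tendsto_zero]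
      have hlim : Tendsto (fun s : ℝ => (Real.cos (φ / 2))⁻¹ * s ^ (-(α - 1))) atTop (𝓝 0) := by
        simpa using (tendsto_rpow_neg_atTop (show 0 < α - 1 by linarith)).const_mul (Real.cos (φ / 2))⁻¹
      apply squeeze_zero' (Eventually.of_forall fun _ => norm_nonneg _) _ hlim
      filter_upwards [eventually_gt_atTop 0] with s hs
      have hp := Real.rpow_pos_of_pos hs α
      have := g_norm (α := α) hs (cos_half_pos h) le_rfl
      rw [norm_mul, Complex.norm_of_nonneg hs.le]
      have hc := cos_half_pos h
      calc _ ≤ s * ((Real.cos (φ / 2))⁻¹ * (1 + s ^ α)⁻¹) := by gcongr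
        _ ≤ s * ((Real.cos (φ / 2))⁻¹ * (s ^ α)⁻¹) := by gcongr; linarith
        _ = _ := by
          rw [neg_sub, Real.rpow_sub hs, Real.rpow_one]; field_simp
  rw [integral_sub (g_int hα h) (hi.const_mul _), integral_const_mul, sub_eq_iff_eq_add] at key
  rw [gfun, key]
  generalize (∫ s in Set.Ioi (0 : ℝ), Complex.I * (((s ^ α : ℝ) : ℂ) * w) / (1 + ((s ^ α : ℝ) : ℂ) * w) ^ 2) = Z
  simp only [Complex.ofReal_zero, zero_mul, sub_zero, zero_add]
  field_simp

lemma g_eq {α φ : ℝ} (hα : 1 < α) (h0 : 0 ≤ φ) (h1 : φ < Real.pi) :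
    gfun α φ = gfun α 0 * Complex.exp (φ / α * Complex.I) := by
  have hα0 : (α : ℂ) ≠ 0 := by exact_mod_cast (by linarith : α ≠ 0)
  have hd : ∀ x ∈ Set.Icc 0 φ, HasDerivAt (fun x : ℝ => gfun α x * Complex.exp (-(x / α * Complex.I))) 0 x := by
    intro x hx
    have hx' : x ∈ Set.Ioo (-Real.pi) Real.pi := ⟨by linarith [hx.1, Real.pi_pos], by linarith [hx.2]⟩
    have h1 : HasDerivAt (fun x : ℝ => -((x : ℂ) / α * Complex.I)) (-(1 / α * Complex.I)) x :=
      (((Complex.ofRealCLM.hasDerivAt (x := x)).div_const _).mul_const _).neg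
    refine HasDerivAt.congr_deriv ((g_deriv hα hx').mul h1.cexp) ?_
    ring
  have := constant_of_has_deriv_right_zero (fun x hx => (hd x hx).continuousAt.continuousWithinAt)
    (fun x hx => (hd x ⟨hx.1, hx.2.le⟩).hasDerivWithinAt) φ ⟨h0, le_rfl⟩
  simp at this
  rw [← this, mul_assoc, ← Complex.exp_add]
  simp

lemma Theta_int {α φ : ℝ} (hα : 1 < α) (h0 : 0 < φ) (h1 : φ < Real.pi) :
    IntegrableOn (fun s : ℝ => Theta φ (s ^ α) 1) (Set.Ioi 0) := by
  apply ((D_int hα).const_mul (4 * Real.pi)).mono'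
  · apply Measurable.aestronglyMeasurable
    simp only [Theta_eq h0 h1 one_pos]
    fun_prop
  · filter_upwards [ae_restrict_mem measurableSet_Ioi] with s hs
    rw [Real.norm_of_nonneg (Theta_nonneg h0 h1 one_pos)]
    exact Theta_le_D h0 h1 (Real.rpow_pos_of_pos hs α)

lemma inv_im_eq {x φ : ℝ} : ((1 + (x : ℂ) * Complex.exp (-(φ * Complex.I)))⁻¹).im
    = x * Real.sin φ / (1 + 2 * x * Real.cos φ + x ^ 2) := by
  have e : Complex.exp (-(φ * Complex.I)) = (Real.cos φ : ℂ) - Real.sin φ * Complex.I := by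
    rw [← neg_mul, ← Complex.ofReal_neg, Complex.exp_mul_I, ← Complex.ofReal_cos, ← Complex.ofReal_sin]
    simp [sub_eq_add_neg]
  rw [e, Complex.inv_im, Complex.normSq_apply]
  simp [Complex.sin_ofReal_re, Complex.cos_ofReal_re]
  congr 1
  nlinarith [Real.sin_sq_add_cos_sq φ]

lemma F_eq {α φ : ℝ} (hα : 1 < α) (h0 : 0 < φ) (h1 : φ < Real.pi) :
    ∫ s in Set.Ioi (0 : ℝ), Theta φ (s ^ α) 1 = α * (gfun α φ).im := by
  have hφ : φ ∈ Set.Ioo (-Real.pi) Real.pi := ⟨by linarith [Real.pi_pos], h1⟩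
  have hsin := Real.sin_pos_of_pos_of_lt_pi h0 h1
  have hgi := g_int hα hφ
  have himi : IntegrableOn (fun s : ℝ => ((1 + ((s ^ α : ℝ) : ℂ) * Complex.exp (-(φ * Complex.I)))⁻¹).im) (Set.Ioi 0) :=
    hgi.im
  have him : ∫ s in Set.Ioi (0 : ℝ), ((1 + ((s ^ α : ℝ) : ℂ) * Complex.exp (-(φ * Complex.I)))⁻¹).im
      = (gfun α φ).im := integral_im hgi
  have key : ∫ s in Set.Ioi (0 : ℝ), (Theta φ (s ^ α) 1 - α * ((1 + ((s ^ α : ℝ) : ℂ) * Complex.exp (-(φ * Complex.I)))⁻¹).im)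
     = 0 - (fun s : ℝ => s * Theta φ (s ^ α) 1) 0 := by
    apply integral_Ioi_of_hasDerivAt_of_tendsto (f := fun s : ℝ => s * Theta φ (s ^ α) 1)
    · apply ContinuousAt.continuousWithinAt
      simp only [Theta_eq h0 h1 one_pos]
      have := Real.continuousAt_rpow_const 0 α (Or.inr (by linarith))
      have h2 := Real.continuous_arctan
      fun_prop
    · intro s hs
      have hp := Real.rpow_pos_of_pos hs α
      simp only [Theta_eq h0 h1 one_pos, inv_im_eq]
      have h1 := (Real.hasDerivAt_rpow_const (p := α) (Or.inl (ne_of_gt hs)))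
      have h2 := (hasDerivAt_id s).mul
        (((h1.add_const (1 * Real.cos φ)).div_const (1 * Real.sin φ)).arctan.const_sub (Real.pi / 2))
      refine HasDerivAt.congr_deriv h2 ?_
      have h3 : s ^ α = s * s ^ (α - 1) := by
        have hs' : s ≠ 0 := ne_of_gt hs
        rw [Real.rpow_sub hs, Real.rpow_one]; field_simp
      have h4 : 1 + 2 * s ^ α * Real.cos φ + (s ^ α) ^ 2 = Real.sin φ ^ 2 + (s ^ α + Real.cos φ) ^ 2 := by
        nlinarith [Real.sin_sq_add_cos_sq φ]
      have h5 : 0 < Real.sin φ ^ 2 + (s ^ α + Real.cos φ) ^ 2 := by positivity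
      rw [h4]
      have h6 : 1 / (1 + ((s ^ α + 1 * Real.cos φ) / (1 * Real.sin φ)) ^ 2) =
          Real.sin φ ^ 2 / (Real.sin φ ^ 2 + (s ^ α + Real.cos φ) ^ 2) := by
        rw [one_mul, one_mul]
        rw [div_eq_div_iff (by positivity) h5.ne']
        field_simp
      rw [h6]
      simp only [id, one_mul]
      have h7 : α * (s ^ α * Real.sin φ / (Real.sin φ ^ 2 + (s ^ α + Real.cos φ) ^ 2)) =
        s * (Real.sin φ ^ 2 / (Real.sin φ ^ 2 + (s ^ α + Real.cos φ) ^ 2) * (α * s ^ (α - 1) / Real.sin φ)) := by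
        have h8 := h5.ne'
        generalize Real.sin φ ^ 2 + (s ^ α + Real.cos φ) ^ 2 = Dn at *
        rw [h3]
        field_simp
      rw [h7]
      ring
    · exact (Theta_int hα h0 h1).sub (himi.const_mul α)
    · have hlim : Tendsto (fun s : ℝ => (2 * Real.pi) * s ^ (-(α - 1))) atTop (𝓝 0) := by
        simpa using (tendsto_rpow_neg_atTop (show 0 < α - 1 by linarith)).const_mul (2 * Real.pi)
      apply squeeze_zero' _ _ hlim
      · filter_upwards [eventually_gt_atTop 0] with s hs
        exact mul_nonneg hs.le (Theta_nonneg h0 h1 one_pos)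
      filter_upwards [eventually_gt_atTop 0] with s hs
      have hp := Real.rpow_pos_of_pos hs α
      calc _ ≤ s * (2 * Real.pi * (1 / s ^ α)) := by
            gcongr
            exact Theta_le_ratio h0 h1 one_pos hp
        _ = _ := by
          rw [neg_sub, Real.rpow_sub hs, Real.rpow_one]; field_simp
  rw [integral_sub (Theta_int hα h0 h1) (himi.const_mul α), integral_const_mul, him] at key
  simp only [zero_mul, sub_zero] at key
  linarith

lemma F_eq2 {α : ℝ} (hα : 1 < α) : ∃ A : ℝ, ∀ φ : ℝ, 0 < φ → φ < Real.pi →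
    ∫ s in Set.Ioi (0 : ℝ), Theta φ (s ^ α) 1 = A * Real.sin (φ / α) := by
  refine ⟨α * (∫ s in Set.Ioi (0 : ℝ), (1 + s ^ α)⁻¹), fun φ h0 h1 => ?_⟩
  have hg0 : gfun α 0 = ((∫ s in Set.Ioi (0 : ℝ), (1 + s ^ α)⁻¹ : ℝ) : ℂ) := by
    have h := integral_ofReal (𝕜 := ℂ) (μ := volume.restrict (Set.Ioi (0:ℝ))) (f := fun s : ℝ => (1 + s ^ α)⁻¹)
    refine Eq.trans ?_ h
    rw [gfun]
    congr 1
    ext s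
    simp
  rw [F_eq hα h0 h1, g_eq hα h0.le h1, hg0, Complex.im_ofReal_mul, ← Complex.ofReal_div,
    Complex.exp_ofReal_mul_I_im, mul_assoc]

lemma Theta_lim {x : ℝ} (hx : x ≠ 1) :
    Tendsto (fun φ => Theta φ x 1) (𝓝[<] Real.pi) (𝓝 (if x < 1 then Real.pi else 0)) := by
  have hev : ∀ᶠ φ in 𝓝[<] Real.pi, 0 < φ ∧ φ < Real.pi := by
    filter_upwards [Ioo_mem_nhdsLT Real.pi_pos] with φ h using h
  have hs : Tendsto (fun φ => (Real.sin φ)⁻¹) (𝓝[<] Real.pi) atTop := by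
    apply tendsto_inv_nhdsGT_zero.comp
    apply tendsto_nhdsWithin_iff.2
    constructor
    · have := Real.continuous_sin.tendsto Real.pi
      rw [Real.sin_pi] at this
      exact this.mono_left nhdsWithin_le_nhds
    · filter_upwards [hev] with φ h using Real.sin_pos_of_pos_of_lt_pi h.1 h.2
  have hc : Tendsto (fun φ => x + Real.cos φ) (𝓝[<] Real.pi) (𝓝 (x - 1)) := by
    have := (Real.continuous_cos.tendsto Real.pi).const_add x
    rw [Real.cos_pi] at this
    exact this.mono_left nhdsWithin_le_nhds
  have hcongr : (fun φ => Theta φ x 1) =ᶠ[𝓝[<] Real.pi]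
      fun φ => Real.pi / 2 - Real.arctan ((x + Real.cos φ) * (Real.sin φ)⁻¹) := by
    filter_upwards [hev] with φ h
    simp only [Theta_eq h.1 h.2 one_pos, one_mul, div_eq_mul_inv]
  rw [tendsto_congr' hcongr]
  rcases lt_or_gt_of_ne hx with h | h
  · rw [if_pos h]
    have h1 := (Real.tendsto_arctan_atBot.mono_right nhdsWithin_le_nhds).comp
      (hc.neg_mul_atTop (by linarith) hs)
    have h2 := h1.const_sub (Real.pi / 2)
    rwa [show Real.pi / 2 - -(Real.pi / 2) = Real.pi by ring] at h2
  · rw [if_neg (by linarith)]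
    have h1 := (Real.tendsto_arctan_atTop.mono_right nhdsWithin_le_nhds).comp
      (hc.pos_mul_atTop (by linarith) hs)
    have h2 := h1.const_sub (Real.pi / 2)
    rwa [sub_self] at h2

lemma F_lim {α : ℝ} (hα : 1 < α) :
    Tendsto (fun φ => ∫ s in Set.Ioi (0 : ℝ), Theta φ (s ^ α) 1) (𝓝[<] Real.pi) (𝓝 Real.pi) := by
  have hev : ∀ᶠ φ in 𝓝[<] Real.pi, 0 < φ ∧ φ < Real.pi := by
    filter_upwards [Ioo_mem_nhdsLT Real.pi_pos] with φ h using h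
  have hv : ∫ s in Set.Ioi (0 : ℝ), (Set.Iio (1:ℝ)).indicator (fun _ => Real.pi) s = Real.pi := by
    rw [setIntegral_indicator measurableSet_Iio, Set.Ioi_inter_Iio]
    simp
  have := tendsto_integral_filter_of_dominated_convergence (μ := volume.restrict (Set.Ioi (0:ℝ)))
    (l := 𝓝[<] Real.pi) (F := fun φ s => Theta φ (s ^ α) 1)
    (f := (Set.Iio (1:ℝ)).indicator (fun _ => Real.pi)) (fun s => 4 * Real.pi * (1 + s ^ α)⁻¹) ?_ ?_ ?_ ?_
  · rwa [hv] at this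
  · filter_upwards [hev] with φ h
    exact (Theta_int hα h.1 h.2).aestronglyMeasurable
  · filter_upwards [hev] with φ h
    filter_upwards [ae_restrict_mem measurableSet_Ioi] with s hs
    rw [Real.norm_of_nonneg (Theta_nonneg h.1 h.2 one_pos)]
    exact Theta_le_D h.1 h.2 (Real.rpow_pos_of_pos hs α)
  · exact (D_int hα).const_mul _
  · filter_upwards [ae_restrict_mem measurableSet_Ioi, ae_restrict_of_ae (Measure.ae_ne volume (1:ℝ))] with s hs hs1
    have hs0 : (0:ℝ) < s := hs
    have hα0 : 0 < α := by linarith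
    rcases lt_or_gt_of_ne hs1 with h | h
    · have h2 := Real.rpow_lt_one hs0.le h hα0
      have := Theta_lim h2.ne
      rw [if_pos h2] at this
      simpa [Set.indicator, h] using this
    · have h2 := Real.one_lt_rpow h hα0
      have := Theta_lim h2.ne'
      rw [if_neg (by linarith)] at this
      simpa [Set.indicator, not_lt.2 h.le] using this

lemma drift_eq {θ : ℝ} (hθ : 0 < θ) (hθπ : θ < Real.pi) :
    ∫ s in Set.Ioi (0 : ℝ), Theta θ (s ^ (1 + θ / Real.pi)) 1 = Real.pi := by
  have hpi := Real.pi_pos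
  have hα : 1 < 1 + θ / Real.pi := by have : 0 < θ / Real.pi := by positivity
                                      linarith
  obtain ⟨A, hA⟩ := F_eq2 hα
  have hev : ∀ᶠ φ in 𝓝[<] Real.pi, 0 < φ ∧ φ < Real.pi := by
    filter_upwards [Ioo_mem_nhdsLT Real.pi_pos] with φ h using h
  have h1 : Tendsto (fun φ => A * Real.sin (φ / (1 + θ / Real.pi))) (𝓝[<] Real.pi) (𝓝 Real.pi) := by
    refine (F_lim hα).congr' ?_
    filter_upwards [hev] with φ h using hA φ h.1 h.2
  have h2 : Tendsto (fun φ => A * Real.sin (φ / (1 + θ / Real.pi))) (𝓝[<] Real.pi)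
      (𝓝 (A * Real.sin (Real.pi / (1 + θ / Real.pi)))) := by
    have : Continuous (fun φ => A * Real.sin (φ / (1 + θ / Real.pi))) := by fun_prop
    exact (this.tendsto Real.pi).mono_left nhdsWithin_le_nhds
  rw [hA θ hθ hθπ]
  refine Eq.trans ?_ (tendsto_nhds_unique h2 h1)
  rw [← Real.sin_pi_sub]
  congr 2
  field_simp
  ring

lemma drift_scale {θ m : ℝ} (hθ : 0 < θ) (hθπ : θ < Real.pi) (hm : 0 < m) :
    IntegrableOn (fun s : ℝ => Theta θ (s ^ (1 + θ / Real.pi)) (m ^ (1 + θ / Real.pi))) (Set.Ioi 0) ∧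
    ∫ s in Set.Ioi (0 : ℝ), Theta θ (s ^ (1 + θ / Real.pi)) (m ^ (1 + θ / Real.pi)) = m * Real.pi := by
  have hpi := Real.pi_pos
  have hα : 1 < 1 + θ / Real.pi := by have : 0 < θ / Real.pi := by positivity
                                      linarith
  have hEq : Set.EqOn (fun s : ℝ => Theta θ ((m⁻¹ * s) ^ (1 + θ / Real.pi)) 1)
      (fun s : ℝ => Theta θ (s ^ (1 + θ / Real.pi)) (m ^ (1 + θ / Real.pi))) (Set.Ioi 0) := by
    intro s hs
    have hs0 : (0:ℝ) < s := hs
    have hp := Real.rpow_pos_of_pos hm (1 + θ / Real.pi)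
    simp only
    rw [← Theta_scale hp, ← Real.mul_rpow (by positivity) hm.le]
    congr 2
    field_simp
  constructor
  · refine IntegrableOn.congr_fun ?_ hEq measurableSet_Ioi
    have := (integrableOn_Ioi_comp_mul_left_iff (fun s : ℝ => Theta θ (s ^ (1 + θ / Real.pi)) 1) 0 (inv_pos.2 hm)).2
      (by simpa using Theta_int hα hθ hθπ)
    exact this
  · rw [← setIntegral_congr_fun measurableSet_Ioi hEq]
    have := integral_comp_mul_left_Ioi (fun s : ℝ => Theta θ (s ^ (1 + θ / Real.pi)) 1) 0 (inv_pos.2 hm)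
    rw [this, mul_zero, drift_eq hθ hθπ, inv_inv, smul_eq_mul]

lemma sum_tail {θ m x0 : ℝ} (hθ : 0 < θ) (hθπ : θ < Real.pi) (hm : 0 < m) (hx0 : 0 ≤ x0) :
    ∑' i : ℕ, ENNReal.ofReal (Theta θ ((x0 + ((i + 1 : ℕ) : ℝ)) ^ (1 + θ / Real.pi)) (m ^ (1 + θ / Real.pi)))
      ≤ ENNReal.ofReal (m * Real.pi) := by
  obtain ⟨hi, he⟩ := drift_scale hθ hθπ hm
  have hp := Real.rpow_pos_of_pos hm (1 + θ / Real.pi)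
  have hα : 0 ≤ 1 + θ / Real.pi := by have : 0 < θ / Real.pi := div_pos hθ Real.pi_pos
                                      linarith
  apply ENNReal.tsum_le_of_sum_range_le
  intro n
  rw [← ENNReal.ofReal_sum_of_nonneg (fun i _ => Theta_nonneg hθ hθπ hp)]
  apply ENNReal.ofReal_le_ofReal
  have hanti : AntitoneOn (fun s : ℝ => Theta θ (s ^ (1 + θ / Real.pi)) (m ^ (1 + θ / Real.pi)))
      (Set.Icc x0 (x0 + n)) := by
    intro a ha b hb hab
    exact Theta_anti hθ hθπ hp (Real.rpow_le_rpow (hx0.trans ha.1) hab hα)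
  refine hanti.sum_le_integral.trans ?_
  rw [intervalIntegral.integral_of_le (by simp), ← he]
  apply setIntegral_mono_set hi
  · exact Eventually.of_forall fun s => Theta_nonneg hθ hθπ hp
  · apply LE.le.eventuallyLE
    intro s hs
    exact lt_of_le_of_lt hx0 hs.1

lemma rpow_le_pow_aux {α : ℝ} (hα2 : α ≤ 2) {N : ℝ} (hN : 4 ≤ N) (n : ℕ) :
    ((n : ℝ) + 1) ^ α ≤ N ^ n := by
  have h1 : (n : ℝ) + 1 ≤ 2 ^ n := by exact_mod_cast (Nat.lt_two_pow_self (n := n))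
  calc ((n : ℝ) + 1) ^ α ≤ ((n : ℝ) + 1) ^ (2 : ℝ) :=
        Real.rpow_le_rpow_of_exponent_le (by linarith [Nat.cast_nonneg (α := ℝ) n]) hα2
    _ = ((n : ℝ) + 1) ^ 2 := by norm_cast
    _ ≤ (2 ^ n) ^ 2 := by gcongr
    _ = 4 ^ n := by rw [← pow_mul, mul_comm, pow_mul]; norm_num
    _ ≤ N ^ n := by gcongr

lemma lowerSeq_pos {θ : ℝ} {N : ℕ} (hN : 4 ≤ N) (k : ℕ) : 0 < lowerSeq θ N k := by
  have hN0 : (4:ℝ) ≤ N := by exact_mod_cast hN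
  unfold lowerSeq
  split_ifs with h
  · positivity
  · apply Real.rpow_pos_of_pos
    have : (N:ℝ)^2 ≤ k := by exact_mod_cast not_lt.1 h
    linarith

lemma ratio_bound {θ : ℝ} (hθ : 0 < θ) (hθπ : θ < Real.pi) {N : ℕ} (hN : 4 ≤ N) {j : ℕ}
    (hj : j < N ^ 2) (i : ℕ) :
    lowerSeq θ N j / lowerSeq θ N (j + i + 1) ≤ (1 / (N : ℝ)) * (((i : ℝ) + 1) ^ (1 + θ / Real.pi))⁻¹ := by
  have hN0 : (4:ℝ) ≤ N := by exact_mod_cast hN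
  have hNp : (0:ℝ) < N := by linarith
  have hα0 : 0 < θ / Real.pi := div_pos hθ Real.pi_pos
  have hα1 : θ / Real.pi < 1 := by rw [div_lt_one Real.pi_pos]; exact hθπ
  set α := 1 + θ / Real.pi with hα
  obtain ⟨r, hr⟩ : ∃ r, N ^ 2 = j + r + 1 := ⟨N ^ 2 - j - 1, by omega⟩
  have hXj : lowerSeq θ N j = ((N : ℝ) * (N : ℝ) ^ r)⁻¹ := by
    rw [lowerSeq, if_pos hj]
    have : ((j : ℤ) - (N : ℤ) ^ 2) = -((r + 1 : ℕ) : ℤ) := by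
      have : ((N ^ 2 : ℕ) : ℤ) = j + r + 1 := by exact_mod_cast hr
      push_cast at this ⊢
      linarith
    rw [this, zpow_neg, zpow_natCast, pow_succ']
  by_cases hk : j + i + 1 < N ^ 2
  · obtain ⟨q, hq⟩ : ∃ q, r = i + 1 + q := ⟨r - i - 1, by omega⟩
    have hXk : lowerSeq θ N (j + i + 1) = ((N : ℝ) * (N : ℝ) ^ q)⁻¹ := by
      rw [lowerSeq, if_pos hk]
      have : (((j + i + 1 : ℕ) : ℤ) - (N : ℤ) ^ 2) = -((q + 1 : ℕ) : ℤ) := by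
        have : ((N ^ 2 : ℕ) : ℤ) = j + r + 1 := by exact_mod_cast hr
        push_cast at this ⊢
        rw [this, hq]; push_cast; ring
      rw [this, zpow_neg, zpow_natCast, pow_succ']
    rw [hXj, hXk, hq]
    have h := rpow_le_pow_aux (α := α) (by linarith) hN0 i
    have hp : 0 < ((i : ℝ) + 1) ^ α := Real.rpow_pos_of_pos (by positivity) _
    calc _ = (1 / (N:ℝ)) * ((N:ℝ) ^ i)⁻¹ := by field_simp; ring
      _ ≤ _ := by gcongr
  · obtain ⟨q, hq⟩ : ∃ q, j + i + 1 = N ^ 2 + q := ⟨j + i + 1 - N ^ 2, by omega⟩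
    have hXk : lowerSeq θ N (j + i + 1) = ((q : ℝ) + N) ^ α := by
      rw [lowerSeq, if_neg hk, hq]
      push_cast
      congr 1
      ring
    rw [hXj, hXk]
    have hi : (i : ℝ) + 1 = r + 1 + q := by
      have : i + 1 = r + 1 + q := by omega
      exact_mod_cast this
    have h := rpow_le_pow_aux (α := α) (by linarith) hN0 r
    have hp : 0 < ((i : ℝ) + 1) ^ α := Real.rpow_pos_of_pos (by positivity) _
    have hp2 : 0 < ((q : ℝ) + N) ^ α := Real.rpow_pos_of_pos (by positivity) _
    have h2 : ((i : ℝ) + 1) ^ α ≤ (N : ℝ) ^ r * ((q : ℝ) + N) ^ α := by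
      calc ((i : ℝ) + 1) ^ α ≤ (((r : ℝ) + 1) * ((q : ℝ) + N)) ^ α := by
            apply Real.rpow_le_rpow (by positivity) _ (by linarith)
            rw [hi]
            nlinarith [Nat.cast_nonneg (α := ℝ) r, Nat.cast_nonneg (α := ℝ) q,
              mul_nonneg (Nat.cast_nonneg (α := ℝ) r) (Nat.cast_nonneg (α := ℝ) q)]
        _ = ((r : ℝ) + 1) ^ α * ((q : ℝ) + N) ^ α := Real.mul_rpow (by positivity) (by positivity)
        _ ≤ _ := by gcongr
    calc _ = (1 / (N:ℝ)) * ((N : ℝ) ^ r * ((q : ℝ) + N) ^ α)⁻¹ := by field_simp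
      _ ≤ _ := by gcongr

lemma gap_aux {θ : ℝ} (hθπ : θ < Real.pi) {Q : ℕ → ℝ}
    {K : ℝ} (hQK : ∀ j : ℕ, 1 ≤ j → (j : ℝ) - K ≤ Q j)
    (hθ : 0 < θ)
    (hQ' : ∀ j : ℕ, 1 ≤ j → ((j : ℝ) - 1 / 2) * θ / Real.pi < Q j) :
    ∃ δ : ℝ, 0 < δ ∧ ∀ j : ℕ, 1 ≤ j → ((j : ℝ) - 1 / 2) * θ / Real.pi + δ ≤ Q j := by
  have hα0 : 0 < θ / Real.pi := div_pos hθ Real.pi_pos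
  have hα1 : θ / Real.pi < 1 := by rw [div_lt_one Real.pi_pos]; exact hθπ
  have hfin : ∀ J : ℕ, ∃ δ : ℝ, 0 < δ ∧ ∀ j : ℕ, 1 ≤ j → j < J → ((j : ℝ) - 1 / 2) * θ / Real.pi + δ ≤ Q j := by
    intro J
    induction J with
    | zero => exact ⟨1, one_pos, fun j _ h => absurd h (by omega)⟩
    | succ J ih =>
      obtain ⟨δ, hδ, h⟩ := ih
      by_cases hJ : 1 ≤ J
      · refine ⟨min δ (Q J - ((J : ℝ) - 1 / 2) * θ / Real.pi), lt_min hδ (by linarith [hQ' J hJ]), fun j h1 h2 => ?_⟩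
        rcases Nat.lt_succ_iff_lt_or_eq.1 h2 with h3 | h3
        · linarith [h j h1 h3, min_le_left δ (Q J - ((J : ℝ) - 1 / 2) * θ / Real.pi)]
        · subst h3
          linarith [min_le_right δ (Q j - ((j : ℝ) - 1 / 2) * θ / Real.pi)]
      · exact ⟨1, one_pos, fun j h1 h2 => by omega⟩
  obtain ⟨J, hJ⟩ := exists_nat_ge ((K + 1) / (1 - θ / Real.pi))
  obtain ⟨δ, hδ, h⟩ := hfin J
  refine ⟨min δ 1, lt_min hδ one_pos, fun j h1 => ?_⟩
  rcases lt_or_ge j J with h2 | h2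
  · linarith [h j h1 h2, min_le_left δ 1]
  · have h3 : (J : ℝ) ≤ j := by exact_mod_cast h2
    have h4 : K + 1 ≤ j * (1 - θ / Real.pi) := by
      rw [← div_le_iff₀ (by linarith)]; linarith
    have h5 : ((j : ℝ) - 1 / 2) * θ / Real.pi = (j - 1 / 2) * (θ / Real.pi) := by ring
    rw [h5]
    nlinarith [hQK j h1, min_le_right δ 1]

lemma phi_small {θ : ℝ} (hθ : 0 < θ) (hθπ : θ < Real.pi) {N : ℕ} (hN : 4 ≤ N) {j : ℕ}
    (hj : 1 ≤ j) (hjN : j < N ^ 2) :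
    phi θ (lowerSeq θ N) (lowerSeq θ N) j ≤ ENNReal.ofReal (((j : ℝ) - 1 / 2) * θ / Real.pi +
      2 * (∑' i : ℕ, (((i : ℝ) + 1) ^ (1 + θ / Real.pi))⁻¹) / N) := by
  have hpi := Real.pi_pos
  have hN0 : (4:ℝ) ≤ N := by exact_mod_cast hN
  have hα0 : 0 < θ / Real.pi := div_pos hθ Real.pi_pos
  have hsum : Summable (fun i : ℕ => (((i : ℝ) + 1) ^ (1 + θ / Real.pi))⁻¹) := by
    have := (summable_nat_add_iff 1).2 ((Real.summable_nat_rpow_inv (p := 1 + θ / Real.pi)).2 (by linarith))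
    simpa using this
  have hnn : ∀ i : ℕ, 0 ≤ (((i : ℝ) + 1) ^ (1 + θ / Real.pi))⁻¹ := fun i => by positivity
  set S := ∑' i : ℕ, (((i : ℝ) + 1) ^ (1 + θ / Real.pi))⁻¹ with hS
  have hS0 : 0 ≤ S := tsum_nonneg hnn
  have hX := lowerSeq_pos (θ := θ) hN
  obtain ⟨l, rfl⟩ : ∃ l, j = l + 1 := ⟨j - 1, by omega⟩
  have hsplit : ∑' k : ℕ, ENNReal.ofReal (Theta θ (lowerSeq θ N (k + 1)) (lowerSeq θ N (l + 1)))
      ≤ ENNReal.ofReal (l * θ + θ / 2 + 2 * Real.pi / N * S) := by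
    rw [← (ENNReal.summable).sum_add_tsum_nat_add' (k := l + 1), Finset.sum_range_succ,
      ENNReal.ofReal_add (by positivity) (by positivity), ENNReal.ofReal_add (by positivity) (by positivity),
      Theta_self hθ hθπ (hX _)]
    gcongr
    · calc _ ≤ ∑ k ∈ Finset.range l, ENNReal.ofReal θ := by
            gcongr with k hk
            exact Theta_le hθ hθπ (hX _) (hX _).le
        _ = _ := by
          rw [Finset.sum_const, Finset.card_range, nsmul_eq_mul, ENNReal.ofReal_mul (by positivity),
            ENNReal.ofReal_natCast]
    · calc _ ≤ ∑' i : ℕ, ENNReal.ofReal (2 * Real.pi / N * (((i : ℝ) + 1) ^ (1 + θ / Real.pi))⁻¹) := by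
            gcongr with i
            refine (Theta_le_ratio hθ hθπ (hX _) (hX _)).trans ?_
            have := ratio_bound hθ hθπ hN hjN i
            rw [show i + (l + 1) + 1 = l + 1 + i + 1 by ring]
            calc _ ≤ 2 * Real.pi * ((1 / (N : ℝ)) * (((i : ℝ) + 1) ^ (1 + θ / Real.pi))⁻¹) := by gcongr
              _ = _ := by ring
        _ = _ := by
          rw [hS, ← tsum_mul_left, ENNReal.ofReal_tsum_of_nonneg (fun i => mul_nonneg (by positivity) (hnn i)) (hsum.mul_left _)]
  rw [phi]
  calc _ ≤ ENNReal.ofReal (1 / Real.pi) * ENNReal.ofReal (l * θ + θ / 2 + 2 * Real.pi / N * S) := by gcongr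
    _ = _ := by
      rw [← ENNReal.ofReal_mul (by positivity)]
      congr 1
      push_cast
      field_simp
      ring

lemma phi_large {θ : ℝ} (hθ : 0 < θ) (hθπ : θ < Real.pi) {N : ℕ} (hN : 4 ≤ N) {j : ℕ}
    (hjN : N ^ 2 ≤ j) :
    phi θ (lowerSeq θ N) (lowerSeq θ N) j ≤ ENNReal.ofReal (((N : ℝ) ^ 2 - 1) * (θ / Real.pi) +
      ((j : ℝ) - N ^ 2 + N)) := by
  have hpi := Real.pi_pos
  have hN0 : (4:ℝ) ≤ N := by exact_mod_cast hN
  have hX := lowerSeq_pos (θ := θ) hN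
  have hj' : (N : ℝ) ^ 2 ≤ j := by exact_mod_cast hjN
  have hN2 : 0 < N ^ 2 := by positivity
  obtain ⟨M, hM⟩ : ∃ M, N ^ 2 = M + 1 := ⟨N ^ 2 - 1, by omega⟩
  have hMr : (N : ℝ) ^ 2 = M + 1 := by exact_mod_cast hM
  have hm : 0 < (j : ℝ) - N ^ 2 + N := by linarith
  have hsplit : ∑' k : ℕ, ENNReal.ofReal (Theta θ (lowerSeq θ N (k + 1)) (lowerSeq θ N j))
      ≤ ENNReal.ofReal (M * θ + ((j : ℝ) - N ^ 2 + N) * Real.pi) := by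
    rw [← (ENNReal.summable).sum_add_tsum_nat_add' (k := M), ENNReal.ofReal_add (by positivity) (by positivity)]
    gcongr
    · calc _ ≤ ∑ k ∈ Finset.range M, ENNReal.ofReal θ := by
            gcongr with k hk
            exact Theta_le hθ hθπ (hX _) (hX _).le
        _ = _ := by
          rw [Finset.sum_const, Finset.card_range, nsmul_eq_mul, ENNReal.ofReal_mul (by positivity),
            ENNReal.ofReal_natCast]
    · refine le_trans (le_of_eq ?_) (sum_tail (x0 := (N : ℝ) - 1) hθ hθπ hm (by linarith))
      congr 1
      ext i
      have e1 : lowerSeq θ N j = ((j : ℝ) - N ^ 2 + N) ^ (1 + θ / Real.pi) := by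
        rw [lowerSeq, if_neg (by omega)]
      have e2 : lowerSeq θ N (i + M + 1) = ((N : ℝ) - 1 + ((i + 1 : ℕ) : ℝ)) ^ (1 + θ / Real.pi) := by
        rw [lowerSeq, if_neg (by omega)]
        congr 1
        push_cast
        linarith
      rw [e1, e2]
  rw [phi]
  calc _ ≤ ENNReal.ofReal (1 / Real.pi) * ENNReal.ofReal (M * θ + ((j : ℝ) - N ^ 2 + N) * Real.pi) := by gcongr
    _ = _ := by
      rw [← ENNReal.ofReal_mul (by positivity)]
      congr 1
      rw [hMr]
      field_simp
      ring

theorem stmt_14 (θ : ℝ) (hθ : 0 < θ) (hθπ : θ < Real.pi)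
    (Q : ℕ → ℝ) (hQpos : ∀ k, 1 ≤ k → 0 < Q k)
    (K : ℝ) (hK : 0 < K) (hQK : ∀ j : ℕ, 1 ≤ j → (j : ℝ) - K ≤ Q j)
    (hQ' : ∀ j : ℕ, 1 ≤ j → ((j : ℝ) - 1 / 2) * θ / Real.pi < Q j) :
    ∃ N₀ : ℕ, ∀ N : ℕ, N₀ ≤ N → ∀ j : ℕ, 1 ≤ j →
      phi θ (lowerSeq θ N) (lowerSeq θ N) j ≤ ENNReal.ofReal (Q j) := by

  obtain ⟨δ, hδ, hgap⟩ := gap_aux hθπ hQK hθ hQ'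
  have hα1 : θ / Real.pi < 1 := by rw [div_lt_one Real.pi_pos]; exact hθπ
  have hα0 : 0 < θ / Real.pi := div_pos hθ Real.pi_pos
  obtain ⟨N₁, hN₁⟩ := exists_nat_ge ((1 + K) / (1 - θ / Real.pi))
  obtain ⟨N₂, hN₂⟩ := exists_nat_ge (2 * (∑' i : ℕ, (((i : ℝ) + 1) ^ (1 + θ / Real.pi))⁻¹) / δ)
  refine ⟨max 4 (max N₁ N₂), fun N hN j hj => ?_⟩
  have h4 : 4 ≤ N := le_trans (le_max_left _ _) hN
  have h1 : (N₁ : ℝ) ≤ N := by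
    exact_mod_cast ((le_max_left _ _).trans (le_max_right _ _)).trans hN
  have h2 : (N₂ : ℝ) ≤ N := by
    exact_mod_cast ((le_max_right _ _).trans (le_max_right _ _)).trans hN
  have hN0 : (4:ℝ) ≤ N := by exact_mod_cast h4
  rcases lt_or_ge j (N ^ 2) with h | h
  · refine (phi_small hθ hθπ h4 hj h).trans (ENNReal.ofReal_le_ofReal ?_)
    refine le_trans ?_ (hgap j hj)
    gcongr
    rw [div_le_iff₀ (by linarith), mul_comm δ, ← div_le_iff₀ hδ]
    linarith
  · refine (phi_large hθ hθπ h4 h).trans (ENNReal.ofReal_le_ofReal ?_)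
    refine le_trans ?_ (hQK j hj)
    have h5 : 1 + K ≤ N * (1 - θ / Real.pi) := by
      rw [← div_le_iff₀ (by linarith)]; linarith
    nlinarith
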